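/- If ψ : M_q(ℂ) → M_r(ℂ) is a positive linear map and T = [τ_{k−j}] ∈ M_n(M_q(ℂ)) is a positive semidefinite block Toeplitz matrix, then the block Toeplitz matrix [ψ(τ_{k−j})]_{k,j=0}^{n−1} ∈ M_n(M_r(ℂ)) is positive semidefinite. (Positive maps on matrix algebras are 'Toeplitz completely positive'.) -/

import Mathlib

/-!
Write `T` as a Gram matrix of vectors `x (k, a)`. The Toeplitz condition says that the families
`x (k, a)` and `x (k + 1, a)` have the same Gram matrix, so some isometry `U` of the (finite
dimensional) ambient space satisfies `x (k + 1, a) = U (x (k, a))`, whence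
`τ (k - j) a b = ⟪U ^ k x₀ a, U ^ j x₀ b⟫` with `x₀ a = x (0, a)`.

An isometry of a finite dimensional complex inner product space has an orthonormal basis `e i` of
eigenvectors, with unimodular eigenvalues `μ i`. Expanding in that basis gives the Gurvits separable
decomposition `τ (k - j) = ∑ i, conj (μ i ^ k) * μ i ^ j • B i`, where `B i` is the rank one
positive semidefinite matrix `conj ⟪e i, x₀ a⟫ * ⟪e i, x₀ b⟫`. Applying `ψ` in each block turns it
into a sum of Kronecker products of positive semidefinite matrices.
-/

open Matrix ComplexOrder
open scoped InnerProductSpace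

section Isometry

variable {E : Type*} [NormedAddCommGroup E] [InnerProductSpace ℂ E]

/-- An eigenvector of an isometry is also an eigenvector of its adjoint, because the eigenvalue is
unimodular. -/
lemma inner_eigenvector_isometry (U : E →ₗᵢ[ℂ] E) {μ : ℂ} {v : E} (hv : U v = μ • v)
    (x : E) : ⟪v, U x⟫_ℂ = μ * ⟪v, x⟫_ℂ := by
  by_cases h0 : v = 0
  · simp [h0]
  have hn : ‖μ‖ = 1 := by
    have h := U.norm_map v
    rw [hv, norm_smul] at h
    exact mul_right_cancel₀ (norm_ne_zero_iff.mpr h0) (by rw [h, one_mul])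
  have hμ : μ * (starRingEnd ℂ) μ = 1 := by
    rw [Complex.mul_conj, Complex.normSq_eq_norm_sq, hn]; simp
  have h := U.inner_map_map v x
  rw [hv, inner_smul_left] at h
  rw [← h, ← mul_assoc, hμ, one_mul]

lemma inner_eigenvector_isometry_iterate (U : E →ₗᵢ[ℂ] E) {μ : ℂ} {v : E} (hv : U v = μ • v)
    (k : ℕ) (x : E) : ⟪v, U^[k] x⟫_ℂ = μ ^ k * ⟪v, x⟫_ℂ := by
  induction k with
  | zero => simp
  | succ k ih =>
    rw [Function.iterate_succ_apply', inner_eigenvector_isometry U hv, ih, pow_succ']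
    ring

/-- The spectral theorem for isometries of a finite dimensional complex inner product space. -/
lemma exists_eigenbasis_isometry [FiniteDimensional ℂ E] (U : E →ₗᵢ[ℂ] E) :
    ∃ (b : OrthonormalBasis (Fin (Module.finrank ℂ E)) ℂ E)
      (μ : Fin (Module.finrank ℂ E) → ℂ), ∀ i, U (b i) = μ i • b i := by
  classical
  let f : Module.End ℂ E := U.toLinearMap
  let V : Module.End.Eigenvalues f → Submodule ℂ E := fun μ => Module.End.eigenspace f μ
  have hmem : ∀ μ v, v ∈ V μ → U v = (μ : ℂ) • v := fun μ v hv =>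
    Module.End.mem_eigenspace_iff.mp hv
  have hV : OrthogonalFamily ℂ (fun i => V i) fun i => (V i).subtypeₗᵢ := by
    refine OrthogonalFamily.of_pairwise fun i j hij => ?_
    refine (Submodule.isOrtho_iff_inner_eq).mpr fun v hv w hw => ?_
    have h := inner_eigenvector_isometry U (hmem i v hv) w
    rw [hmem j w hw, inner_smul_right] at h
    have hne : (j : ℂ) - (i : ℂ) ≠ 0 := sub_ne_zero.mpr fun h => hij (Subtype.ext h.symm)
    have h2 : ((j : ℂ) - (i : ℂ)) * ⟪v, w⟫_ℂ = 0 := by rw [sub_mul, h, sub_self]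
    exact (mul_eq_zero.mp h2).resolve_left hne
  have hinv : ∀ x ∈ (iSup V)ᗮ, f x ∈ (iSup V)ᗮ := by
    intro x hx
    rw [← Submodule.iInf_orthogonal, Submodule.mem_iInf] at hx ⊢
    intro μ
    rw [Submodule.mem_orthogonal]
    intro v hv
    have := inner_eigenvector_isometry U (hmem μ v hv) x
    rw [(Submodule.mem_orthogonal _ _).mp (hx μ) v hv, mul_zero] at this
    exact this
  have hint : DirectSum.IsInternal V := by
    rw [hV.isInternal_iff]
    by_contra hne
    -- An eigenvector of `U` inside the orthogonal complement of all eigenspaces is orthogonal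
    -- to itself.
    have : Nontrivial ↥((iSup V)ᗮ) := Submodule.nontrivial_iff_ne_bot.mpr hne
    obtain ⟨c, hc⟩ := Module.End.exists_eigenvalue (f.restrict hinv)
    obtain ⟨v, hv⟩ := hc.exists_hasEigenvector
    have hv1 : f (v : E) = c • (v : E) := congrArg Subtype.val hv.apply_eq_smul
    have hv0 : (v : E) ≠ 0 := fun h => hv.2 (Subtype.ext h)
    have hev : Module.End.HasEigenvalue f c :=
      Module.End.hasEigenvalue_of_hasEigenvector
        ⟨Module.End.mem_eigenspace_iff.mpr hv1, hv0⟩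
    have hvin : (v : E) ∈ iSup V :=
      Submodule.mem_iSup_of_mem (⟨c, hev⟩ : Module.End.Eigenvalues f)
        (Module.End.mem_eigenspace_iff.mpr hv1)
    exact hv0 (inner_self_eq_zero.mp ((Submodule.mem_orthogonal _ _).mp v.2 _ hvin))
  exact ⟨hint.subordinateOrthonormalBasis rfl hV,
    fun i => (hint.subordinateOrthonormalBasisIndex rfl i hV).val,
    fun i => hmem _ _ (hint.subordinateOrthonormalBasis_subordinate rfl i hV)⟩

/-- Two finite families with the same Gram matrix differ by an isometry of the whole space. -/
lemma exists_isometry_of_gram_eq [FiniteDimensional ℂ E] {ι : Type*} [Fintype ι] (f g : ι → E)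
    (h : ∀ i j, ⟪f i, f j⟫_ℂ = ⟪g i, g j⟫_ℂ) : ∃ U : E →ₗᵢ[ℂ] E, ∀ i, U (f i) = g i := by
  classical
  let F : (ι → ℂ) →ₗ[ℂ] E := Fintype.linearCombination ℂ f
  let G : (ι → ℂ) →ₗ[ℂ] E := Fintype.linearCombination ℂ g
  have hin : ∀ c, ⟪F c, F c⟫_ℂ = ⟪G c, G c⟫_ℂ := by
    intro c
    simp only [F, G, Fintype.linearCombination_apply, sum_inner, inner_sum, inner_smul_left,
      inner_smul_right, h]
  have hnorm : ∀ c, ‖F c‖ = ‖G c‖ := by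
    intro c
    have := hin c
    rw [inner_self_eq_norm_sq_to_K, inner_self_eq_norm_sq_to_K] at this
    have h2 : ‖F c‖ ^ 2 = ‖G c‖ ^ 2 := by exact_mod_cast this
    exact (sq_eq_sq₀ (norm_nonneg _) (norm_nonneg _)).mp h2
  have hker : F.ker ≤ G.ker := by
    intro c hc
    rw [LinearMap.mem_ker] at hc ⊢
    rw [← norm_eq_zero, ← hnorm, hc, norm_zero]
  let L : F.range →ₗ[ℂ] E := (F.ker.liftQ G hker) ∘ₗ F.quotKerEquivRange.symm.toLinearMap
  have hL : ∀ c, L ⟨F c, c, rfl⟩ = G c := by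
    intro c
    have : F.quotKerEquivRange.symm ⟨F c, c, rfl⟩ = F.ker.mkQ c :=
      F.quotKerEquivRange_symm_apply_image c _
    simp [L, this]
  let Liso : F.range →ₗᵢ[ℂ] E := ⟨L, by
    rintro ⟨_, c, rfl⟩
    rw [hL]
    exact (hnorm c).symm⟩
  refine ⟨Liso.extend, fun i => ?_⟩
  have hF : F (Pi.single i 1) = f i := by simp [F]
  have hG : G (Pi.single i 1) = g i := by simp [G]
  have := Liso.extend_apply ⟨F (Pi.single i 1), _, rfl⟩
  rw [← hF, this, ← hG]
  exact hL _

end Isometry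

open scoped MatrixOrder Matrix.Norms.L2Operator in
/-- A positive semidefinite matrix is a Gram matrix. -/
lemma exists_gram_of_posSemidef {ι : Type*} [Fintype ι] [DecidableEq ι] {T : Matrix ι ι ℂ}
    (hT : T.PosSemidef) : ∃ x : ι → EuclideanSpace ℂ ι, ∀ i j, T i j = ⟪x i, x j⟫_ℂ := by
  obtain ⟨B, rfl⟩ := CStarAlgebra.nonneg_iff_eq_star_mul_self.mp hT.nonneg
  refine ⟨fun i => WithLp.toLp 2 fun k => B k i, fun i j => ?_⟩
  simp [PiLp.inner_apply, Matrix.mul_apply, mul_comm]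

/-- The Gurvits separation theorem: a positive semidefinite block Toeplitz matrix is a sum of
Kronecker products of rank one positive semidefinite matrices `[conj (μ ^ k) * μ ^ j]` with positive
semidefinite matrices. -/
lemma exists_separation (m q : ℕ) (τ : ℤ → Matrix (Fin q) (Fin q) ℂ)
    (T : Matrix (Fin (m + 1) × Fin q) (Fin (m + 1) × Fin q) ℂ)
    (hT : ∀ (k j : Fin (m + 1)) (a b : Fin q), T (k, a) (j, b) = τ ((k : ℤ) - (j : ℤ)) a b)
    (hpos : T.PosSemidef) :
    ∃ (d : ℕ) (μ : Fin d → ℂ) (B : Fin d → Matrix (Fin q) (Fin q) ℂ),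
      (∀ i, (B i).PosSemidef) ∧ ∀ k j : Fin (m + 1), τ ((k : ℤ) - (j : ℤ)) =
        ∑ i, (star (μ i ^ (k : ℕ)) * μ i ^ (j : ℕ)) • B i := by
  obtain ⟨x, hx⟩ := exists_gram_of_posSemidef hpos
  obtain ⟨U, hU⟩ := exists_isometry_of_gram_eq
    (fun p : Fin m × Fin q => x (p.1.castSucc, p.2)) (fun p => x (p.1.succ, p.2)) (by
      rintro ⟨k, a⟩ ⟨j, b⟩
      simp only [← hx, hT]
      simp only [Fin.val_castSucc, Fin.val_succ, Nat.cast_add, Nat.cast_one,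
        add_sub_add_right_eq_sub])
  have hiter : ∀ (k : Fin (m + 1)) (a : Fin q), x (k, a) = U^[(k : ℕ)] (x (0, a)) := by
    intro k a
    induction k using Fin.induction with
    | zero => rfl
    | succ k ih =>
      rw [← hU (k, a), Fin.val_succ, Function.iterate_succ_apply']
      simp only [ih, Fin.val_castSucc]
  obtain ⟨e, μ, he⟩ := exists_eigenbasis_isometry U
  refine ⟨_, μ, fun i => vecMulVec (star fun a => ⟪e i, x (0, a)⟫_ℂ) fun a => ⟪e i, x (0, a)⟫_ℂ,
    fun i => posSemidef_vecMulVec_star_self _, fun k j => ?_⟩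
  ext a b
  rw [← hT, hx, ← e.sum_inner_mul_inner, Matrix.sum_apply]
  refine Finset.sum_congr rfl fun i _ => ?_
  rw [← inner_conj_symm, hiter k a, hiter j b, inner_eigenvector_isometry_iterate U (he i),
    inner_eigenvector_isometry_iterate U (he i)]
  simp only [map_mul, Matrix.smul_apply, vecMulVec_apply, Pi.star_apply, smul_eq_mul,
    RCLike.star_def]
  ring

/-- Positive linear maps on matrix algebras are "Toeplitz completely positive". -/
theorem stmt17 (n q r : ℕ)
    (ψ : Matrix (Fin q) (Fin q) ℂ →ₗ[ℂ] Matrix (Fin r) (Fin r) ℂ)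
    (hψ : ∀ x : Matrix (Fin q) (Fin q) ℂ, x.PosSemidef → (ψ x).PosSemidef)
    (τ : ℤ → Matrix (Fin q) (Fin q) ℂ)
    (T : Matrix (Fin n × Fin q) (Fin n × Fin q) ℂ)
    (hT : ∀ (k j : Fin n) (a b : Fin q), T (k, a) (j, b) = τ ((k : ℤ) - (j : ℤ)) a b)
    (hpos : T.PosSemidef)
    (S : Matrix (Fin n × Fin r) (Fin n × Fin r) ℂ)
    (hS : ∀ (k j : Fin n) (a b : Fin r), S (k, a) (j, b) = ψ (τ ((k : ℤ) - (j : ℤ))) a b) :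
    S.PosSemidef := by
  cases n with
  | zero =>
    rw [Subsingleton.elim S 0]
    exact PosSemidef.zero
  | succ m =>
    obtain ⟨d, μ, B, hB, hτ⟩ := exists_separation m q τ T hT hpos
    have hSsum : S = ∑ i, kronecker
        (vecMulVec (star fun k : Fin (m + 1) => μ i ^ (k : ℕ)) fun k : Fin (m + 1) => μ i ^ (k : ℕ))
        (ψ (B i)) := by
      ext ⟨k, a⟩ ⟨j, b⟩
      rw [hS, hτ, map_sum, Matrix.sum_apply, Matrix.sum_apply]
      refine Finset.sum_congr rfl fun i _ => ?_
      simp [vecMulVec_apply]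
    rw [hSsum]
    exact posSemidef_sum _ fun i _ =>
      (posSemidef_vecMulVec_star_self _).kronecker (hψ _ (hB i))
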